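/- For N = 2, the matrix-valued function ϑ(w,z) = (1/2i)cos((2/π)z)σ₁ + (w/(πi))σ₂ + (1/2i)sin((2/π)z)σ₃, where σ₁, σ₂, σ₃ are the Pauli matrices, satisfies the su(2) chiral field equation ∂²_w ϑ + ∂²_z ϑ + [∂_w ϑ, ∂_z ϑ] = 0. -/

import Mathlib

open Matrix

/-- The Pauli matrices. -/
noncomputable def pauli1 : Matrix (Fin 2) (Fin 2) ℂ := !![0, 1; 1, 0]
noncomputable def pauli2 : Matrix (Fin 2) (Fin 2) ℂ := !![0, -Complex.I; Complex.I, 0]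
noncomputable def pauli3 : Matrix (Fin 2) (Fin 2) ℂ := !![1, 0; 0, -1]

/-- `ϑ(w,z) = (1/2i)cos((2/π)z)σ₁ + (w/(πi))σ₂ + (1/2i)sin((2/π)z)σ₃`. -/
noncomputable def chiralSolN2 (w z : ℝ) : Matrix (Fin 2) (Fin 2) ℂ :=
  ((1 : ℂ) / (2 * Complex.I) * Complex.cos (((2 / Real.pi) * z : ℝ) : ℂ)) • pauli1 +
    ((w : ℂ) / (Real.pi * Complex.I)) • pauli2 +
    ((1 : ℂ) / (2 * Complex.I) * Complex.sin (((2 / Real.pi) * z : ℝ) : ℂ)) • pauli3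

lemma chiral_aux_cos (z : ℝ) :
    HasDerivAt (fun b : ℝ => Complex.cos (((2 / Real.pi) * b : ℝ) : ℂ))
      (-(2 / Real.pi : ℂ) * Complex.sin (((2 / Real.pi) * z : ℝ) : ℂ)) z := by
  have h1 : HasDerivAt (fun b : ℝ => (((2 / Real.pi) * b : ℝ) : ℂ)) (((2 / Real.pi) * 1 : ℝ) : ℂ) z :=
    ((hasDerivAt_id z).const_mul (2 / Real.pi)).ofReal_comp
  refine HasDerivAt.congr_deriv (HasDerivAt.comp z (Complex.hasDerivAt_cos _) h1) ?_
  push_cast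
  ring

lemma chiral_aux_sin (z : ℝ) :
    HasDerivAt (fun b : ℝ => Complex.sin (((2 / Real.pi) * b : ℝ) : ℂ))
      ((2 / Real.pi : ℂ) * Complex.cos (((2 / Real.pi) * z : ℝ) : ℂ)) z := by
  have h1 : HasDerivAt (fun b : ℝ => (((2 / Real.pi) * b : ℝ) : ℂ)) (((2 / Real.pi) * 1 : ℝ) : ℂ) z :=
    ((hasDerivAt_id z).const_mul (2 / Real.pi)).ofReal_comp
  refine HasDerivAt.congr_deriv (HasDerivAt.comp z (Complex.hasDerivAt_sin _) h1) ?_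
  push_cast
  ring

lemma chiral_aux_w (w z : ℝ) (i j : Fin 2) :
    deriv (fun b => chiralSolN2 b z i j) w = 1 / (Real.pi * Complex.I) * pauli2 i j := by
  have h : HasDerivAt (fun b : ℝ => (b : ℂ)) 1 w := (hasDerivAt_id w).ofReal_comp
  have h2 := (((h.div_const (Real.pi * Complex.I)).mul_const (pauli2 i j)).const_add
    ((1 : ℂ) / (2 * Complex.I) * Complex.cos (((2 / Real.pi) * z : ℝ) : ℂ) * pauli1 i j)).add_const
    ((1 : ℂ) / (2 * Complex.I) * Complex.sin (((2 / Real.pi) * z : ℝ) : ℂ) * pauli3 i j)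
  exact h2.deriv

lemma chiral_aux_z (w z : ℝ) (i j : Fin 2) :
    deriv (fun b => chiralSolN2 w b i j) z =
      (1 : ℂ) / (2 * Complex.I) *
        (-(2 / Real.pi : ℂ) * Complex.sin (((2 / Real.pi) * z : ℝ) : ℂ)) * pauli1 i j +
      (1 : ℂ) / (2 * Complex.I) *
        ((2 / Real.pi : ℂ) * Complex.cos (((2 / Real.pi) * z : ℝ) : ℂ)) * pauli3 i j := by
  have h2 := ((((chiral_aux_cos z).const_mul ((1 : ℂ) / (2 * Complex.I))).mul_const
    (pauli1 i j)).add_const ((w : ℂ) / (Real.pi * Complex.I) * pauli2 i j)).add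
    (((chiral_aux_sin z).const_mul ((1 : ℂ) / (2 * Complex.I))).mul_const (pauli3 i j))
  exact h2.deriv

lemma chiral_aux_zz (w z : ℝ) (i j : Fin 2) :
    deriv (fun a => deriv (fun b => chiralSolN2 w b i j) a) z =
      (1 : ℂ) / (2 * Complex.I) * (-(2 / Real.pi : ℂ) *
        ((2 / Real.pi : ℂ) * Complex.cos (((2 / Real.pi) * z : ℝ) : ℂ))) * pauli1 i j +
      (1 : ℂ) / (2 * Complex.I) * ((2 / Real.pi : ℂ) *
        (-(2 / Real.pi : ℂ) * Complex.sin (((2 / Real.pi) * z : ℝ) : ℂ))) * pauli3 i j := by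
  simp only [chiral_aux_z]
  exact (((((chiral_aux_sin z).const_mul (-(2 / Real.pi : ℂ))).const_mul
    ((1 : ℂ) / (2 * Complex.I))).mul_const (pauli1 i j)).add
    ((((chiral_aux_cos z).const_mul (2 / Real.pi : ℂ)).const_mul
    ((1 : ℂ) / (2 * Complex.I))).mul_const (pauli3 i j))).deriv

/-- Entrywise second partial derivatives; `ϑ` satisfies the `su(2)` chiral field
equation `∂²_w ϑ + ∂²_z ϑ + [∂_w ϑ, ∂_z ϑ] = 0`. -/
theorem chiralSolN2_satisfies_chiral (w z : ℝ) :
    (Matrix.of fun i j => deriv (fun a => deriv (fun b => chiralSolN2 b z i j) a) w) +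
      (Matrix.of fun i j => deriv (fun a => deriv (fun b => chiralSolN2 w b i j) a) z) +
      ((Matrix.of fun i j => deriv (fun b => chiralSolN2 b z i j) w) *
          (Matrix.of fun i j => deriv (fun b => chiralSolN2 w b i j) z) -
        (Matrix.of fun i j => deriv (fun b => chiralSolN2 w b i j) z) *
          (Matrix.of fun i j => deriv (fun b => chiralSolN2 b z i j) w)) = 0 := by
  simp only [chiral_aux_zz]
  simp only [chiral_aux_w, chiral_aux_z, deriv_const]
  generalize Complex.cos (((2 / Real.pi) * z : ℝ) : ℂ) = c
  generalize Complex.sin (((2 / Real.pi) * z : ℝ) : ℂ) = s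
  have hp : (Real.pi : ℂ) ≠ 0 := by exact_mod_cast Real.pi_ne_zero
  have hI := Complex.I_ne_zero
  have hI2 := Complex.I_sq
  ext i j
  fin_cases i <;> fin_cases j <;>
    simp [Matrix.mul_apply, Fin.sum_univ_two, pauli1, pauli2, pauli3] <;>
    field_simp <;> ring_nf <;> simp
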